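/- Let ℓ, m ∈ ℤ≥1 and a ∈ ℂ∖{0}. There exists a linear bijection R : V(ℓ,a) ⊗ V(m) → V(m) ⊗ V(ℓ,a) intertwining the actions of all five operators Δ(E₀⁺), Δ(E₁⁺), Δ(E₁⁻), Δ(K₀), Δ(K₁) and satisfying R x̃_{ℓ+m−2ν} = (−1)^ν q^{−ν(ℓ+m−ν+1)} x̃'_{ℓ+m−2ν} for all 0 ≤ ν ≤ min{ℓ,m}; moreover, every linear map V(ℓ,a) ⊗ V(m) → V(m) ⊗ V(ℓ,a) intertwining all five operators is a scalar multiple of R. -/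

import Mathlib

/-!
The intertwiner is the `R`-matrix of `U_q(sl₂)`: the flip composed with `H * Θ`, where
`Θ = ∑ₙ cₙ (E₁⁻)ⁿ ⊗ (E₁⁺)ⁿ` is the quasi-`R`-matrix (`Th`) and `H` the diagonal Cartan factor
(`Hd`).
The commutator formula for `(E₁⁺)ⁿ` and `E₁⁻` shows, through a telescoping sum, that `Θ` moves
`Δ(E₁⁻)` to `1 ⊗ E₁⁻ + E₁⁻ ⊗ K₁` (`Th_F`) and `Δ(E₁⁺)` to `E₁⁺ ⊗ 1 + K₀ ⊗ E₁⁺` (`Th_E`).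
Conjugation by `H` turns these into `K₀ ⊗ E₁⁻ + E₁⁻ ⊗ 1` and `E₁⁺ ⊗ K₁ + 1 ⊗ E₁⁺`, which are the
flipped coproducts. Both `Θ` (unipotent) and `H` are invertible, so the composite `Rm` is bijective.

For `V(ℓ,a) ⊗ V(m)` there is nothing more to do for `Δ(E₀⁺)`: because the evaluation parameter of
`V(m)` is `0`, it is `aq E₁⁻ ⊗ 1`, which commutes with `Θ`, becomes `aq E₁⁻ ⊗ K₀` under
conjugation by `H`, and is flipped to `aq K₀ ⊗ E₁⁻`, the operator on the other side.

The vectors `x̃ₙ` and `x̃'ₙ` are killed by `Δ(E₁⁻)` (`dE1m_xt`), hence so is `R x̃ₙ - α x̃'ₙ`. Such a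
vector is determined by its components along `vₘ ⊗ vₖ` (`eq_zero_of_dE1m`). On these `Θ`
contributes only its constant term, so they are read off from `H` (`cc_Rm`), and the value of `α`
makes them cancel.

For uniqueness, an intertwiner sends `v₀ ⊗ v₀` into the `q^(-ℓ-m)`-eigenspace of `K₀`, which is a
line as `q` is not a root of unity; so it agrees there with a multiple of `R`. For `a ≠ 0` the
vector `v₀ ⊗ v₀` generates everything under `Δ(E₀⁺)`, a nonzero multiple of `E₁⁻ ⊗ 1`, and
`Δ(E₁⁻)` (`cyclic`), so the two maps are equal (`Rm_unique`).
-/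

open scoped TensorProduct

noncomputable section

/-- The `q`-integer `[t] = (q^t - q^(-t))/(q - q⁻¹)`. -/
def qnum (q : ℂ) (t : ℤ) : ℂ := (q ^ t - q ^ (-t)) / (q - q⁻¹)

/-- The `q`-factorial `[t]! = [t][t-1]⋯[1]`. -/
def qfac (q : ℂ) (t : ℕ) : ℂ := ∏ k ∈ Finset.range t, qnum q ((k : ℤ) + 1)

/-- Commutator `[X,Y] = XY - YX`. -/
def brk {V : Type*} [AddCommGroup V] [Module ℂ V] (X Y : Module.End ℂ V) :
    Module.End ℂ V := X * Y - Y * X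

/-- `q`-commutator `[X,Y]_t = t XY - t⁻¹ YX`. -/
def brkq {V : Type*} [AddCommGroup V] [Module ℂ V] (t : ℂ) (X Y : Module.End ℂ V) :
    Module.End ℂ V := t • (X * Y) - t⁻¹ • (Y * X)

/-- A `U'_q(L(sl₂))`-module structure on a complex vector space `V`:
operators `(E₀⁺, E₁⁺, E₁⁻, K₀, K₁)` with `K₀, K₁` mutually inverse (hence invertible) and
the defining relations; `K₀ = K₁⁻¹` throughout. -/
structure IsUqpRep (q : ℂ) {V : Type*} [AddCommGroup V] [Module ℂ V]
    (E0 E1p E1m K0 K1 : Module.End ℂ V) : Prop where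
  K0K1 : K0 * K1 = 1
  K1K0 : K1 * K0 = 1
  K0E0 : K0 * E0 = q ^ 2 • (E0 * K0)
  K1E1p : K1 * E1p = q ^ 2 • (E1p * K1)
  K1E1m : K1 * E1m = (q ^ 2)⁻¹ • (E1m * K1)
  K1E0 : K1 * E0 = (q ^ 2)⁻¹ • (E0 * K1)
  K0E1p : K0 * E1p = (q ^ 2)⁻¹ • (E1p * K0)
  K0E1m : K0 * E1m = q ^ 2 • (E1m * K0)
  e1comm : E1p * E1m - E1m * E1p = (q - q⁻¹)⁻¹ • (K1 - K0)
  e0e1m : E0 * E1m = E1m * E0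
  serre01 : brk E0 (brkq q⁻¹ E0 (brkq q E0 E1p)) = 0
  serre10 : brk E1p (brkq q⁻¹ E1p (brkq q E1p E0)) = 0

/-- `K₀` of the evaluation module `V(ℓ,a)`: `K₀ vᵢ = q^(2i-ℓ) vᵢ`. -/
def evalK0 (q : ℂ) (ℓ : ℕ) : Module.End ℂ (Fin (ℓ + 1) → ℂ) :=
  (Matrix.diagonal fun i : Fin (ℓ + 1) => q ^ (2 * (i : ℤ) - ℓ)).mulVecLin

/-- `K₁` of the evaluation module `V(ℓ,a)`: `K₁ vᵢ = q^(ℓ-2i) vᵢ`. -/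
def evalK1 (q : ℂ) (ℓ : ℕ) : Module.End ℂ (Fin (ℓ + 1) → ℂ) :=
  (Matrix.diagonal fun i : Fin (ℓ + 1) => q ^ ((ℓ : ℤ) - 2 * i)).mulVecLin

/-- `E₀⁺` of the evaluation module `V(ℓ,a)`: `E₀⁺ vᵢ = a q [i+1] vᵢ₊₁`. -/
def evalE0 (q a : ℂ) (ℓ : ℕ) : Module.End ℂ (Fin (ℓ + 1) → ℂ) :=
  (Matrix.of fun j i : Fin (ℓ + 1) =>
    if (j : ℕ) = (i : ℕ) + 1 then a * q * qnum q ((i : ℤ) + 1) else 0).mulVecLin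

/-- `E₁⁺` of the evaluation module `V(ℓ,a)`: `E₁⁺ vᵢ = [ℓ-i+1] vᵢ₋₁`. -/
def evalE1p (q : ℂ) (ℓ : ℕ) : Module.End ℂ (Fin (ℓ + 1) → ℂ) :=
  (Matrix.of fun j i : Fin (ℓ + 1) =>
    if (i : ℕ) = (j : ℕ) + 1 then qnum q ((ℓ : ℤ) - (i : ℤ) + 1) else 0).mulVecLin

/-- `E₁⁻` of the evaluation module `V(ℓ,a)`: `E₁⁻ vᵢ = [i+1] vᵢ₊₁`. -/
def evalE1m (q : ℂ) (ℓ : ℕ) : Module.End ℂ (Fin (ℓ + 1) → ℂ) :=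
  (Matrix.of fun j i : Fin (ℓ + 1) =>
    if (j : ℕ) = (i : ℕ) + 1 then qnum q ((i : ℤ) + 1) else 0).mulVecLin

/-- Irreducibility: the only subspaces invariant under all five operators are `⊥` and `⊤`. -/
def IsIrred {V : Type*} [AddCommGroup V] [Module ℂ V]
    (E0 E1p E1m K0 K1 : Module.End ℂ V) : Prop :=
  ∀ W : Submodule ℂ V, (∀ v ∈ W, E0 v ∈ W) → (∀ v ∈ W, E1p v ∈ W) →
    (∀ v ∈ W, E1m v ∈ W) → (∀ v ∈ W, K0 v ∈ W) → (∀ v ∈ W, K1 v ∈ W) →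
    W = ⊥ ∨ W = ⊤

/-- Type `(1,1)`: `K₀` is diagonalizable with all eigenvalues of the form `q^(2i-d)`,
`0 ≤ i ≤ d`, i.e. the corresponding eigenspaces span. -/
def IsType11 (q : ℂ) {V : Type*} [AddCommGroup V] [Module ℂ V] (K0 : Module.End ℂ V) : Prop :=
  ∃ d : ℕ, ⨆ i : Fin (d + 1), Module.End.eigenspace K0 (q ^ (2 * (i : ℤ) - d)) = ⊤

/-- `Δ(K₀) = K₀ ⊗ K₀` on `V(ℓ,a) ⊗ V(m,b)`. -/
def dK0 (q : ℂ) (ℓ m : ℕ) :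
    Module.End ℂ (TensorProduct ℂ (Fin (ℓ + 1) → ℂ) (Fin (m + 1) → ℂ)) :=
  TensorProduct.map (evalK0 q ℓ) (evalK0 q m)

/-- `Δ(K₁) = K₁ ⊗ K₁` on `V(ℓ,a) ⊗ V(m,b)`. -/
def dK1 (q : ℂ) (ℓ m : ℕ) :
    Module.End ℂ (TensorProduct ℂ (Fin (ℓ + 1) → ℂ) (Fin (m + 1) → ℂ)) :=
  TensorProduct.map (evalK1 q ℓ) (evalK1 q m)

/-- `Δ(E₀⁺) = K₀ ⊗ E₀⁺ + E₀⁺ ⊗ 1` on `V(ℓ,a) ⊗ V(m,b)`. -/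
def dE0 (q : ℂ) (ℓ m : ℕ) (a b : ℂ) :
    Module.End ℂ (TensorProduct ℂ (Fin (ℓ + 1) → ℂ) (Fin (m + 1) → ℂ)) :=
  TensorProduct.map (evalK0 q ℓ) (evalE0 q b m) +
    TensorProduct.map (evalE0 q a ℓ) LinearMap.id

/-- `Δ(E₁⁺) = K₁ ⊗ E₁⁺ + E₁⁺ ⊗ 1` on `V(ℓ,a) ⊗ V(m,b)`. -/
def dE1p (q : ℂ) (ℓ m : ℕ) :
    Module.End ℂ (TensorProduct ℂ (Fin (ℓ + 1) → ℂ) (Fin (m + 1) → ℂ)) :=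
  TensorProduct.map (evalK1 q ℓ) (evalE1p q m) +
    TensorProduct.map (evalE1p q ℓ) LinearMap.id

/-- `Δ(E₁⁻) = 1 ⊗ E₁⁻ + E₁⁻ ⊗ K₁⁻¹` on `V(ℓ,a) ⊗ V(m,b)` (note `K₁⁻¹ = K₀`). -/
def dE1m (q : ℂ) (ℓ m : ℕ) :
    Module.End ℂ (TensorProduct ℂ (Fin (ℓ + 1) → ℂ) (Fin (m + 1) → ℂ)) :=
  TensorProduct.map LinearMap.id (evalE1m q m) +
    TensorProduct.map (evalE1m q ℓ) (evalK0 q m)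

/-- A linear map intertwines the five structure operators of two
`U'_q(L(sl₂))`-module structures. -/
def IntertwinesAll {V W : Type*} [AddCommGroup V] [Module ℂ V] [AddCommGroup W] [Module ℂ W]
    (σ : V →ₗ[ℂ] W) (A0 A1p A1m AK0 AK1 : Module.End ℂ V)
    (B0 B1p B1m BK0 BK1 : Module.End ℂ W) : Prop :=
  σ ∘ₗ A0 = B0 ∘ₗ σ ∧ σ ∘ₗ A1p = B1p ∘ₗ σ ∧ σ ∘ₗ A1m = B1m ∘ₗ σ ∧
    σ ∘ₗ AK0 = BK0 ∘ₗ σ ∧ σ ∘ₗ AK1 = BK1 ∘ₗ σ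

/-- The lowest weight vector `x̃ₙ`, `n = ℓ+m-2ν`, of the `ν`-th Clebsch-Gordan component
of `V(ℓ,a) ⊗ V(m)`; defined to be `0` for `ν` out of range. -/
def xt (q : ℂ) (ℓ m : ℕ) (ν : ℤ) :
    TensorProduct ℂ (Fin (ℓ + 1) → ℂ) (Fin (m + 1) → ℂ) :=
  if h : 0 ≤ ν ∧ ν ≤ ℓ ∧ ν ≤ m then
    ∑ j : Fin (ν.toNat + 1),
      ((-1) ^ (j : ℕ) * q ^ ((j : ℕ) * (m - (j : ℕ) + 1)) *
          qfac q (ℓ - ν.toNat + (j : ℕ)) * qfac q (m - (j : ℕ))) •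
        (Pi.single (⟨ℓ - ν.toNat + (j : ℕ), by have := j.isLt; omega⟩ : Fin (ℓ + 1)) (1 : ℂ)
          ⊗ₜ[ℂ] Pi.single (⟨m - (j : ℕ), by have := j.isLt; omega⟩ : Fin (m + 1)) (1 : ℂ))
  else 0

/-- The lowest weight vector `x̃'ₙ`, `n = ℓ+m-2ν`, of the `ν`-th Clebsch-Gordan component
of `V(m) ⊗ V(ℓ,a)`; defined to be `0` for `ν` out of range. -/
def xt' (q : ℂ) (ℓ m : ℕ) (ν : ℤ) :
    TensorProduct ℂ (Fin (m + 1) → ℂ) (Fin (ℓ + 1) → ℂ) :=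
  if h : 0 ≤ ν ∧ ν ≤ ℓ ∧ ν ≤ m then
    ∑ j : Fin (ν.toNat + 1),
      ((-1) ^ (j : ℕ) * q ^ ((j : ℕ) * (ℓ - (j : ℕ) + 1)) *
          qfac q (m - ν.toNat + (j : ℕ)) * qfac q (ℓ - (j : ℕ))) •
        (Pi.single (⟨m - ν.toNat + (j : ℕ), by have := j.isLt; omega⟩ : Fin (m + 1)) (1 : ℂ)
          ⊗ₜ[ℂ] Pi.single (⟨ℓ - (j : ℕ), by have := j.isLt; omega⟩ : Fin (ℓ + 1)) (1 : ℂ))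
  else 0

/-! ### Coordinates on one evaluation module -/

/-- The `i`-th coordinate functional on `V(ℓ,a)`, with the value `0` for `i > ℓ`. -/
def co (ℓ i : ℕ) : (Fin (ℓ + 1) → ℂ) →ₗ[ℂ] ℂ :=
  if h : i < ℓ + 1 then LinearMap.proj ⟨i, h⟩ else 0

lemma co_fin {ℓ : ℕ} (i : Fin (ℓ + 1)) (f : Fin (ℓ + 1) → ℂ) : co ℓ i f = f i := by
  rw [co, dif_pos i.isLt]; rfl

lemma co_of_gt {ℓ i : ℕ} (h : ℓ < i) : co ℓ i = 0 := by
  simp [co]; omega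

lemma co_of_le {ℓ i : ℕ} (h : i ≤ ℓ) (f : Fin (ℓ + 1) → ℂ) :
    co ℓ i f = f ⟨i, by omega⟩ := by
  simp [co, Nat.lt_succ_of_le h]

lemma co_single {ℓ i j : ℕ} (hj : j < ℓ + 1) :
    co ℓ i (Pi.single (⟨j, hj⟩ : Fin (ℓ + 1)) (1 : ℂ)) = if i = j then 1 else 0 := by
  by_cases h : i < ℓ + 1
  · simp [co, h, Pi.single_apply]
  · rw [co_of_gt (by omega), if_neg (by omega)]; rfl

lemma end_ext {ℓ : ℕ} {A B : Module.End ℂ (Fin (ℓ + 1) → ℂ)}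
    (h : ∀ i ≤ ℓ, co ℓ i ∘ₗ A = co ℓ i ∘ₗ B) : A = B := by
  refine LinearMap.ext fun f => funext fun i => ?_
  have := LinearMap.congr_fun (h i (by omega)) f
  simpa [co_fin] using this

lemma qnum_zero (q : ℂ) : qnum q 0 = 0 := by simp [qnum]

lemma co_K0 (q : ℂ) (ℓ i : ℕ) :
    co ℓ i ∘ₗ evalK0 q ℓ = q ^ (2 * (i : ℤ) - ℓ) • co ℓ i := by
  refine LinearMap.ext fun f => ?_
  by_cases h : i < ℓ + 1
  · simp [co, h, evalK0, Matrix.mulVec_diagonal]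
  · simp [co, h]

lemma co_K1 (q : ℂ) (ℓ i : ℕ) :
    co ℓ i ∘ₗ evalK1 q ℓ = q ^ ((ℓ : ℤ) - 2 * i) • co ℓ i := by
  refine LinearMap.ext fun f => ?_
  by_cases h : i < ℓ + 1
  · simp [co, h, evalK1, Matrix.mulVec_diagonal]
  · simp [co, h]

lemma co_E (q : ℂ) (ℓ i : ℕ) :
    co ℓ i ∘ₗ evalE1p q ℓ = qnum q ((ℓ : ℤ) - i) • co ℓ (i + 1) := by
  refine LinearMap.pi_ext' fun j => LinearMap.ext_ring ?_
  obtain ⟨j, hj⟩ := j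
  simp only [LinearMap.comp_apply, LinearMap.smul_apply, LinearMap.single_apply,
    co_single, smul_eq_mul]
  by_cases h : i ≤ ℓ
  · rw [co_of_le h]
    simp only [evalE1p, Matrix.mulVecLin_apply, Matrix.mulVec_single_one, Matrix.col_apply,
      Matrix.of_apply]
    by_cases hij : i + 1 = j
    · subst hij
      simp only [if_true, mul_one]
      congr 1; push_cast; ring
    · simp [hij, Ne.symm hij]
  · rw [co_of_gt (by omega), if_neg (by omega)]; simp

lemma co_F_zero (q : ℂ) (ℓ : ℕ) : co ℓ 0 ∘ₗ evalE1m q ℓ = 0 := by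
  refine LinearMap.pi_ext' fun j => LinearMap.ext_ring ?_
  simp [co, evalE1m]

lemma co_F_succ (q : ℂ) {ℓ i : ℕ} (h : i + 1 ≤ ℓ) :
    co ℓ (i + 1) ∘ₗ evalE1m q ℓ = qnum q ((i : ℤ) + 1) • co ℓ i := by
  refine LinearMap.pi_ext' fun j => LinearMap.ext_ring ?_
  obtain ⟨j, hj⟩ := j
  simp only [LinearMap.comp_apply, LinearMap.smul_apply, LinearMap.single_apply,
    co_single, smul_eq_mul]
  rw [co_of_le h]
  simp only [evalE1m, Matrix.mulVecLin_apply, Matrix.mulVec_single_one, Matrix.col_apply,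
    Matrix.of_apply]
  by_cases hij : i = j
  · subst hij; simp
  · simp [hij]

lemma E0_eq (q a : ℂ) (ℓ : ℕ) : evalE0 q a ℓ = (a * q) • evalE1m q ℓ := by
  refine LinearMap.ext fun f => ?_
  rw [evalE0, evalE1m, LinearMap.smul_apply, Matrix.mulVecLin_apply, Matrix.mulVecLin_apply,
    ← Matrix.smul_mulVec]
  congr 1
  ext i j
  simp [mul_ite]

/-! ### The relations of `U_q(sl₂)` on an evaluation module -/

section Relations

variable {q : ℂ}

lemma K0_mul_K1 (hq0 : q ≠ 0) (ℓ : ℕ) : evalK0 q ℓ * evalK1 q ℓ = 1 := by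
  refine end_ext fun i _ => ?_
  rw [Module.End.mul_eq_comp, ← LinearMap.comp_assoc, co_K0, LinearMap.smul_comp, co_K1, smul_smul,
    ← zpow_add₀ hq0]
  simp [Module.End.one_eq_id]

lemma K1_mul_K0 (hq0 : q ≠ 0) (ℓ : ℕ) : evalK1 q ℓ * evalK0 q ℓ = 1 := by
  refine end_ext fun i _ => ?_
  rw [Module.End.mul_eq_comp, ← LinearMap.comp_assoc, co_K1, LinearMap.smul_comp, co_K0, smul_smul,
    ← zpow_add₀ hq0]
  simp [Module.End.one_eq_id]

lemma K1_mul_E (hq0 : q ≠ 0) (ℓ : ℕ) :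
    evalK1 q ℓ * evalE1p q ℓ = q ^ (2 : ℤ) • (evalE1p q ℓ * evalK1 q ℓ) := by
  refine end_ext fun i _ => ?_
  simp only [Module.End.mul_eq_comp, LinearMap.comp_smul, ← LinearMap.comp_assoc, co_K1, co_E,
    LinearMap.smul_comp, smul_smul]
  congr 1
  have : q ^ ((ℓ : ℤ) - 2 * i) = q ^ (2 : ℤ) * q ^ ((ℓ : ℤ) - 2 * ((i + 1 : ℕ) : ℤ)) := by
    rw [← zpow_add₀ hq0]; congr 1; push_cast; ring
  rw [this]; ring

lemma F_mul_K1 (hq0 : q ≠ 0) (ℓ : ℕ) :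
    evalE1m q ℓ * evalK1 q ℓ = q ^ (2 : ℤ) • (evalK1 q ℓ * evalE1m q ℓ) := by
  refine end_ext fun i hi => ?_
  simp only [Module.End.mul_eq_comp, LinearMap.comp_smul, ← LinearMap.comp_assoc, co_K1,
    LinearMap.smul_comp, smul_smul]
  cases i with
  | zero => simp [co_F_zero]
  | succ i =>
    simp only [co_F_succ q hi, LinearMap.smul_comp, co_K1, smul_smul]
    congr 1
    have : q ^ ((ℓ : ℤ) - 2 * i) = q ^ (2 : ℤ) * q ^ ((ℓ : ℤ) - 2 * ((i + 1 : ℕ) : ℤ)) := by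
      rw [← zpow_add₀ hq0]; congr 1; push_cast; ring
    rw [this]; ring

/-- `K₀ = K₁⁻¹` inherits the commutation with `E₁⁺` from `K₁`. -/
lemma E_mul_K0 (hq0 : q ≠ 0) (ℓ : ℕ) :
    evalE1p q ℓ * evalK0 q ℓ = q ^ (2 : ℤ) • (evalK0 q ℓ * evalE1p q ℓ) := by
  calc evalE1p q ℓ * evalK0 q ℓ
      = evalK0 q ℓ * (evalK1 q ℓ * evalE1p q ℓ) * evalK0 q ℓ := by
        rw [← mul_assoc (evalK0 q ℓ), K0_mul_K1 hq0, one_mul]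
    _ = q ^ (2 : ℤ) • (evalK0 q ℓ * evalE1p q ℓ * (evalK1 q ℓ * evalK0 q ℓ)) := by
        rw [K1_mul_E hq0, mul_smul_comm, smul_mul_assoc]; simp only [mul_assoc]
    _ = _ := by rw [K1_mul_K0 hq0, mul_one]

lemma K0_mul_F (hq0 : q ≠ 0) (ℓ : ℕ) :
    evalK0 q ℓ * evalE1m q ℓ = q ^ (2 : ℤ) • (evalE1m q ℓ * evalK0 q ℓ) := by
  calc evalK0 q ℓ * evalE1m q ℓ
      = evalK0 q ℓ * (evalE1m q ℓ * evalK1 q ℓ) * evalK0 q ℓ := by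
        rw [mul_assoc, mul_assoc, K1_mul_K0 hq0, mul_one]
    _ = q ^ (2 : ℤ) • ((evalK0 q ℓ * evalK1 q ℓ) * evalE1m q ℓ * evalK0 q ℓ) := by
        rw [F_mul_K1 hq0, mul_smul_comm, smul_mul_assoc]; simp only [mul_assoc]
    _ = _ := by rw [K0_mul_K1 hq0, one_mul]

lemma sub_inv_ne (hq0 : q ≠ 0) (hq : ∀ n : ℕ, 0 < n → q ^ n ≠ 1) : q - q⁻¹ ≠ 0 := by
  intro h
  apply hq 2 (by norm_num)
  have := sub_eq_zero.mp h
  field_simp at this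
  exact this

lemma qnum_succ_ne (hq0 : q ≠ 0) (hq : ∀ n : ℕ, 0 < n → q ^ n ≠ 1) (n : ℕ) :
    qnum q ((n : ℤ) + 1) ≠ 0 := by
  refine div_ne_zero (fun h => ?_) (sub_inv_ne hq0 hq)
  apply hq (2 * (n + 1)) (by omega)
  have h1 := sub_eq_zero.mp h
  rw [zpow_neg] at h1
  have h2 : q ^ ((n : ℤ) + 1) ≠ 0 := zpow_ne_zero _ hq0
  field_simp at h1
  rw [← h1, ← zpow_natCast, ← zpow_natCast, ← zpow_mul]
  congr 1; push_cast; ring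

lemma E_F_comm (hq0 : q ≠ 0) (hd : q - q⁻¹ ≠ 0) (ℓ : ℕ) :
    evalE1p q ℓ * evalE1m q ℓ - evalE1m q ℓ * evalE1p q ℓ
      = (q - q⁻¹)⁻¹ • (evalK1 q ℓ - evalK0 q ℓ) := by
  refine end_ext fun i hi => ?_
  have h1 : co ℓ i ∘ₗ (evalE1p q ℓ ∘ₗ evalE1m q ℓ)
      = (qnum q ((ℓ : ℤ) - i) * qnum q ((i : ℤ) + 1)) • co ℓ i := by
    rw [← LinearMap.comp_assoc, co_E, LinearMap.smul_comp]
    rcases hi.eq_or_lt with rfl | hi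
    · simp [qnum_zero]
    · rw [co_F_succ q hi, smul_smul]
  have h2 : co ℓ i ∘ₗ (evalE1m q ℓ ∘ₗ evalE1p q ℓ)
      = (qnum q i * qnum q ((ℓ : ℤ) - i + 1)) • co ℓ i := by
    rw [← LinearMap.comp_assoc]
    cases i with
    | zero => simp [co_F_zero, qnum_zero]
    | succ i =>
      rw [co_F_succ q hi, LinearMap.smul_comp, co_E, smul_smul]
      congr 2
      · congr 1; push_cast; ring
  simp only [Module.End.mul_eq_comp, LinearMap.comp_sub, LinearMap.comp_smul, h1, h2, co_K1, co_K0,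
    ← sub_smul, smul_smul]
  congr 1
  have e1 : q ^ ((ℓ : ℤ) - 2 * i) = q ^ (ℓ : ℤ) * (q ^ (i : ℤ))⁻¹ * (q ^ (i : ℤ))⁻¹ := by
    rw [← zpow_neg, ← zpow_add₀ hq0, ← zpow_add₀ hq0]; congr 1; ring
  have e2 : q ^ (2 * (i : ℤ) - ℓ) = (q ^ (ℓ : ℤ))⁻¹ * q ^ (i : ℤ) * q ^ (i : ℤ) := by
    rw [← zpow_neg, ← zpow_add₀ hq0, ← zpow_add₀ hq0]; congr 1; ring
  rw [e1, e2]
  simp only [qnum, neg_add, neg_sub, zpow_add₀ hq0, zpow_sub₀ hq0, zpow_neg, zpow_one]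
  have hi0 : q ^ (i : ℤ) ≠ 0 := zpow_ne_zero _ hq0
  have hl0 : q ^ (ℓ : ℤ) ≠ 0 := zpow_ne_zero _ hq0
  generalize q ^ (i : ℤ) = x at *
  generalize q ^ (ℓ : ℤ) = y at *
  have hd' : q ^ 2 - 1 ≠ 0 := by
    intro h; apply hd; rw [show q - q⁻¹ = (q ^ 2 - 1) / q by field_simp, h, zero_div]
  field_simp
  ring

lemma F_pow_eq_zero (q : ℂ) {ℓ n : ℕ} (hn : ℓ < n) : evalE1m q ℓ ^ n = 0 := by
  have key : ∀ n i, i < n → i ≤ ℓ → co ℓ i ∘ₗ (evalE1m q ℓ ^ n) = 0 := by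
    intro n
    induction n with
    | zero => intro i hi; omega
    | succ n ih =>
      intro i hi hl
      rw [pow_succ', Module.End.mul_eq_comp, ← LinearMap.comp_assoc]
      cases i with
      | zero => simp [co_F_zero]
      | succ i => rw [co_F_succ q hl, LinearMap.smul_comp, ih i (by omega) (by omega), smul_zero]
  exact end_ext fun i hi => by rw [key n i (by omega) hi, LinearMap.comp_zero]

lemma E_pow_eq_zero (q : ℂ) {ℓ n : ℕ} (hn : ℓ < n) : evalE1p q ℓ ^ n = 0 := by
  have key : ∀ n i, ℓ < i + n → co ℓ i ∘ₗ (evalE1p q ℓ ^ n) = 0 := by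
    intro n
    induction n with
    | zero => intro i hi; rw [co_of_gt (by omega)]; simp
    | succ n ih =>
      intro i hi
      rw [pow_succ', Module.End.mul_eq_comp, ← LinearMap.comp_assoc, co_E, LinearMap.smul_comp,
        ih (i + 1) (by omega), smul_zero]
  exact end_ext fun i hi => by rw [key n i (by omega), LinearMap.comp_zero]

end Relations

/-! ### The coefficients of the quasi-`R`-matrix -/

section Abstract

variable {q : ℂ} {B : Type*} [Ring B] [Algebra ℂ B]

/-- The commutator of a power of `E` with `F`. It is stated in an arbitrary algebra so that it can
also be read in the opposite one, where the roles of `E` and `F` are exchanged. -/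
lemma pow_comm_F (hq0 : q ≠ 0) (hd : q - q⁻¹ ≠ 0) {E F K K' : B}
    (hEF : E * F - F * E = (q - q⁻¹)⁻¹ • (K - K'))
    (hK : K * E = q ^ (2 : ℤ) • (E * K)) (hK' : E * K' = q ^ (2 : ℤ) • (K' * E)) (n : ℕ) :
    E ^ (n + 1) * F - F * E ^ (n + 1)
      = (qnum q ((n : ℤ) + 1) * (q - q⁻¹)⁻¹ * (q ^ n)⁻¹) • (K * E ^ n - E ^ n * K') := by
  have hd' : q ^ 2 - 1 ≠ 0 := by
    intro h; apply hd; rw [show q - q⁻¹ = (q ^ 2 - 1) / q by field_simp, h, zero_div]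
  have hK2 : E * K = (q ^ (2 : ℤ))⁻¹ • (K * E) := by
    rw [hK, inv_smul_smul₀ (zpow_ne_zero _ hq0)]
  have hK2' : K' * E = (q ^ (2 : ℤ))⁻¹ • (E * K') := by
    rw [hK', inv_smul_smul₀ (zpow_ne_zero _ hq0)]
  have hpow : ∀ n : ℕ, K' * E ^ n = ((q ^ n)⁻¹ * (q ^ n)⁻¹) • (E ^ n * K') := by
    intro n
    induction n with
    | zero => simp
    | succ n ih =>
      rw [pow_succ, ← mul_assoc, ih, smul_mul_assoc, mul_assoc, hK2', mul_smul_comm, smul_smul,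
        ← mul_assoc]
      congr 1
      field_simp
      ring
  induction n with
  | zero =>
    simp only [zero_add, pow_one, hEF, pow_zero, mul_one, one_mul, inv_one, Nat.cast_zero]
    congr 1
    have : qnum q 1 = 1 := by simp [qnum, hd]
    rw [this, one_mul]
  | succ n ih =>
    have h1 : E ^ (n + 1 + 1) * F - F * E ^ (n + 1 + 1)
        = E * (E ^ (n + 1) * F - F * E ^ (n + 1)) + (E * F - F * E) * E ^ (n + 1) := by
      rw [pow_succ' E (n + 1)]; noncomm_ring
    rw [h1, ih, hEF]
    have h2 : E * (K * E ^ n - E ^ n * K')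
        = (q ^ (2 : ℤ))⁻¹ • (K * E ^ (n + 1)) - E ^ (n + 1) * K' := by
      rw [mul_sub, ← mul_assoc, hK2, smul_mul_assoc, mul_assoc, ← pow_succ', ← mul_assoc,
        ← pow_succ']
    rw [mul_smul_comm, h2, smul_mul_assoc, sub_mul, hpow]
    simp only [qnum, smul_sub, smul_smul]
    have hn0 : q ^ n ≠ 0 := pow_ne_zero _ hq0
    rw [show ∀ X Y Z W : B, X - Y + (Z - W) = (X + Z) - (Y + W) by intros; abel, ← add_smul,
      ← add_smul]
    congr 2
    · push_cast
      simp only [neg_add, zpow_add₀ hq0, zpow_neg, zpow_one, zpow_natCast, pow_succ]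
      norm_cast
      field_simp
      ring
    · push_cast
      simp only [neg_add, zpow_add₀ hq0, zpow_neg, zpow_one, zpow_natCast, pow_succ]
      field_simp
      ring

lemma pow_comm_E (hq0 : q ≠ 0) (hd : q - q⁻¹ ≠ 0) {E F K K' : B}
    (hEF : E * F - F * E = (q - q⁻¹)⁻¹ • (K - K'))
    (hK : F * K = q ^ (2 : ℤ) • (K * F)) (hK' : K' * F = q ^ (2 : ℤ) • (F * K')) (n : ℕ) :
    E * F ^ (n + 1) - F ^ (n + 1) * E
      = (qnum q ((n : ℤ) + 1) * (q - q⁻¹)⁻¹ * (q ^ n)⁻¹) • (F ^ n * K - K' * F ^ n) := by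
  have := pow_comm_F (B := Bᵐᵒᵖ) hq0 hd (E := .op F) (F := .op E) (K := .op K) (K' := .op K')
    (by simpa using congrArg MulOpposite.op hEF) (by simpa using congrArg MulOpposite.op hK)
    (by simpa using congrArg MulOpposite.op hK') n
  simpa using congrArg MulOpposite.unop this

end Abstract

/-- The coefficients `cₙ = ∏_{k<n} q^k (q - q⁻¹)/[k+1]` of the quasi-`R`-matrix. -/
def qc (q : ℂ) (n : ℕ) : ℂ :=
  ∏ k ∈ Finset.range n, q ^ k * (q - q⁻¹) * (qnum q ((k : ℤ) + 1))⁻¹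

lemma qc_succ {q : ℂ} (hq0 : q ≠ 0) (hq : ∀ n : ℕ, 0 < n → q ^ n ≠ 1) (n : ℕ) :
    qc q (n + 1) * (qnum q ((n : ℤ) + 1) * (q - q⁻¹)⁻¹ * (q ^ n)⁻¹) = qc q n := by
  have h1 := sub_inv_ne hq0 hq
  have h2 := qnum_succ_ne hq0 hq n
  have h3 := pow_ne_zero n hq0
  rw [qc, Finset.prod_range_succ, ← qc]
  generalize qnum q ((n : ℤ) + 1) = x at *
  generalize q - q⁻¹ = y at *
  field_simp

section Abstract

variable {q : ℂ} {B : Type*} [Ring B] [Algebra ℂ B]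

lemma qc_comm_F (hq0 : q ≠ 0) (hq : ∀ n : ℕ, 0 < n → q ^ n ≠ 1) {E F K K' : B}
    (hEF : E * F - F * E = (q - q⁻¹)⁻¹ • (K - K'))
    (hK : K * E = q ^ (2 : ℤ) • (E * K)) (hK' : E * K' = q ^ (2 : ℤ) • (K' * E)) (n : ℕ) :
    qc q (n + 1) • (E ^ (n + 1) * F) + qc q n • (E ^ n * K')
      = qc q (n + 1) • (F * E ^ (n + 1)) + qc q n • (K * E ^ n) := by
  have h := congrArg (qc q (n + 1) • ·) (pow_comm_F hq0 (sub_inv_ne hq0 hq) hEF hK hK' n)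
  simp only [smul_smul, qc_succ hq0 hq, smul_sub] at h
  rw [sub_eq_sub_iff_add_eq_add] at h
  rw [h, add_comm]

lemma qc_comm_E (hq0 : q ≠ 0) (hq : ∀ n : ℕ, 0 < n → q ^ n ≠ 1) {E F K K' : B}
    (hEF : E * F - F * E = (q - q⁻¹)⁻¹ • (K - K'))
    (hK : F * K = q ^ (2 : ℤ) • (K * F)) (hK' : K' * F = q ^ (2 : ℤ) • (F * K')) (n : ℕ) :
    qc q (n + 1) • (E * F ^ (n + 1)) + qc q n • (K' * F ^ n)
      = qc q (n + 1) • (F ^ (n + 1) * E) + qc q n • (F ^ n * K) := by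
  have h := congrArg (qc q (n + 1) • ·) (pow_comm_E hq0 (sub_inv_ne hq0 hq) hEF hK hK' n)
  simp only [smul_smul, qc_succ hq0 hq, smul_sub] at h
  rw [sub_eq_sub_iff_add_eq_add] at h
  rw [h, add_comm]

/-- A polynomial in a nilpotent element with constant term `1` is invertible. -/
lemma isUnit_sum_pow {A : B} {N : ℕ} (hA : A ^ N = 0) (c : ℕ → ℂ) (hc : c 0 = 1) (n : ℕ) :
    IsUnit (∑ k ∈ Finset.range (n + 1), c k • A ^ k) := by
  have hT : ∑ k ∈ Finset.range (n + 1), c k • A ^ k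
      = (∑ k ∈ Finset.range n, c (k + 1) • A ^ k) * A + 1 := by
    rw [Finset.sum_range_succ', Finset.sum_mul]
    simp [hc, pow_succ]
  rw [hT]
  refine IsNilpotent.isUnit_add_one (Commute.isNilpotent_mul_left ?_ ⟨N, hA⟩)
  exact Commute.sum_left _ _ _ fun k _ => ((Commute.refl A).pow_left k).smul_left _

end Abstract

/-- Summation with the terms `b`, `b'` paired with the terms `a`, `a'` of the next index. -/
lemma sum_shift {C : Type*} [AddCommMonoid C] {a b a' b' : ℕ → C} {N : ℕ} (h0 : a 0 = a' 0)
    (h : ∀ n, a (n + 1) + b n = a' (n + 1) + b' n) (hb : b N = 0) (hb' : b' N = 0) :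
    ∑ n ∈ Finset.range (N + 1), (a n + b n) = ∑ n ∈ Finset.range (N + 1), (a' n + b' n) := by
  have key : ∀ a b : ℕ → C, b N = 0 → ∑ n ∈ Finset.range (N + 1), (a n + b n)
      = ∑ n ∈ Finset.range N, (a (n + 1) + b n) + a 0 := by
    intro a b hb
    rw [Finset.sum_add_distrib, Finset.sum_range_succ', Finset.sum_range_succ b, hb, add_zero,
      Finset.sum_add_distrib, add_right_comm]
  rw [key a b hb, key a' b' hb', h0, Finset.sum_congr rfl fun n _ => h n]

/-! ### Coordinates on the tensor product -/

/-- The `(i,k)`-th coordinate functional on `V(ℓ,a) ⊗ V(m,b)`, zero out of range. -/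
def cc (ℓ m i k : ℕ) : (Fin (ℓ + 1) → ℂ) ⊗[ℂ] (Fin (m + 1) → ℂ) →ₗ[ℂ] ℂ :=
  LinearMap.mul' ℂ ℂ ∘ₗ TensorProduct.map (co ℓ i) (co m k)

/-- The basis `vᵢ ⊗ vₖ` of `V(ℓ,a) ⊗ V(m,b)`. -/
def tb (ℓ m : ℕ) : Module.Basis (Fin (ℓ + 1) × Fin (m + 1)) ℂ
    ((Fin (ℓ + 1) → ℂ) ⊗[ℂ] (Fin (m + 1) → ℂ)) :=
  (Pi.basisFun ℂ (Fin (ℓ + 1))).tensorProduct (Pi.basisFun ℂ (Fin (m + 1)))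

lemma cc_tmul (ℓ m i k : ℕ) (x : Fin (ℓ + 1) → ℂ) (y : Fin (m + 1) → ℂ) :
    cc ℓ m i k (x ⊗ₜ y) = co ℓ i x * co m k y := by
  simp [cc]

lemma tb_repr {ℓ m : ℕ} (i : Fin (ℓ + 1)) (k : Fin (m + 1))
    (x : (Fin (ℓ + 1) → ℂ) ⊗[ℂ] (Fin (m + 1) → ℂ)) :
    (tb ℓ m).equivFun x (i, k) = cc ℓ m i k x := by
  induction x using TensorProduct.induction_on with
  | zero => simp
  | add x y hx hy => rw [map_add, map_add, Pi.add_apply, hx, hy]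
  | tmul x y =>
    simp [cc_tmul, co_fin, tb, Module.Basis.equivFun_apply,
      Module.Basis.tensorProduct_repr_tmul_apply, mul_comm]

lemma cc_ext {ℓ m : ℕ} {x y : (Fin (ℓ + 1) → ℂ) ⊗[ℂ] (Fin (m + 1) → ℂ)}
    (h : ∀ i k, i ≤ ℓ → k ≤ m → cc ℓ m i k x = cc ℓ m i k y) : x = y := by
  apply (tb ℓ m).equivFun.injective
  funext ⟨i, k⟩
  rw [tb_repr, tb_repr, h i k (by omega) (by omega)]

lemma cc_end_ext {ℓ m : ℕ} {A B : Module.End ℂ ((Fin (ℓ + 1) → ℂ) ⊗[ℂ] (Fin (m + 1) → ℂ))}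
    (h : ∀ i k, i ≤ ℓ → k ≤ m → cc ℓ m i k ∘ₗ A = cc ℓ m i k ∘ₗ B) : A = B :=
  LinearMap.ext fun x => cc_ext fun i k hi hk => LinearMap.congr_fun (h i k hi hk) x

/-- `A ⊗ B` as an element of the endomorphism ring of `V(ℓ,a) ⊗ V(m,b)`. -/
def tm {ℓ m : ℕ} (A : Module.End ℂ (Fin (ℓ + 1) → ℂ)) (B : Module.End ℂ (Fin (m + 1) → ℂ)) :
    Module.End ℂ ((Fin (ℓ + 1) → ℂ) ⊗[ℂ] (Fin (m + 1) → ℂ)) :=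
  TensorProduct.map A B

section tm

variable {ℓ m : ℕ} (A A' : Module.End ℂ (Fin (ℓ + 1) → ℂ)) (B B' : Module.End ℂ (Fin (m + 1) → ℂ))

lemma tm_tmul (x : Fin (ℓ + 1) → ℂ) (y : Fin (m + 1) → ℂ) : tm A B (x ⊗ₜ y) = A x ⊗ₜ B y := rfl

lemma tm_mul : tm (A * A') (B * B') = tm A B * tm A' B' := TensorProduct.map_mul _ _ _ _

lemma tm_pow (n : ℕ) : tm A B ^ n = tm (A ^ n) (B ^ n) := TensorProduct.map_pow _ _ n

lemma tm_one : tm (1 : Module.End ℂ (Fin (ℓ + 1) → ℂ)) (1 : Module.End ℂ (Fin (m + 1) → ℂ)) = 1 :=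
  TensorProduct.map_one

lemma tm_zero_left : tm (0 : Module.End ℂ (Fin (ℓ + 1) → ℂ)) B = 0 := TensorProduct.map_zero_left _

lemma tm_zero_right : tm A (0 : Module.End ℂ (Fin (m + 1) → ℂ)) = 0 :=
  TensorProduct.map_zero_right _

lemma tm_smul_left (c : ℂ) : tm (c • A) B = c • tm A B := TensorProduct.map_smul_left _ _ _

lemma tm_smul_right (c : ℂ) : tm A (c • B) = c • tm A B := TensorProduct.map_smul_right _ _ _

lemma tm_add_left : tm (A + A') B = tm A B + tm A' B := TensorProduct.map_add_left _ _ _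

lemma tm_add_right : tm A (B + B') = tm A B + tm A B' := TensorProduct.map_add_right _ _ _

end tm

lemma cc_map {ℓ m i k i' k' : ℕ} {α β : ℂ} {A : Module.End ℂ (Fin (ℓ + 1) → ℂ)}
    {B : Module.End ℂ (Fin (m + 1) → ℂ)} (hA : co ℓ i ∘ₗ A = α • co ℓ i')
    (hB : co m k ∘ₗ B = β • co m k') :
    cc ℓ m i k ∘ₗ tm A B = (α * β) • cc ℓ m i' k' := by
  refine TensorProduct.ext' fun x y => ?_
  have h1 := LinearMap.congr_fun hA x
  have h2 := LinearMap.congr_fun hB y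
  simp only [LinearMap.comp_apply, LinearMap.smul_apply, smul_eq_mul] at h1 h2
  simp only [LinearMap.comp_apply, tm_tmul, cc_tmul, h1, h2, LinearMap.smul_apply,
    smul_eq_mul]
  ring

lemma cc_comm (ℓ m i k : ℕ) :
    cc m ℓ k i ∘ₗ (TensorProduct.comm ℂ (Fin (ℓ + 1) → ℂ) (Fin (m + 1) → ℂ)).toLinearMap
      = cc ℓ m i k :=
  TensorProduct.ext' fun x y => by simp [cc_tmul, mul_comm]

lemma cc_single {ℓ m i k i' k' : ℕ} (hi : i' < ℓ + 1) (hk : k' < m + 1) :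
    cc ℓ m i k (Pi.single (⟨i', hi⟩ : Fin (ℓ + 1)) (1 : ℂ) ⊗ₜ[ℂ]
      Pi.single (⟨k', hk⟩ : Fin (m + 1)) (1 : ℂ)) = if i = i' ∧ k = k' then 1 else 0 := by
  rw [cc_tmul, co_single, co_single]
  by_cases h1 : i = i' <;> by_cases h2 : k = k' <;> simp [h1, h2]

lemma co_id (ℓ i : ℕ) : co ℓ i ∘ₗ (1 : Module.End ℂ _) = (1 : ℂ) • co ℓ i := by
  simp [Module.End.one_eq_id]

/-- A form of the action of `E₁⁻` on coordinates uniform in `i`: the term at `i = 0` vanishes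
because `[0] = 0`, so the truncated `i - 1` is harmless. -/
lemma co_F (q : ℂ) {ℓ i : ℕ} (h : i ≤ ℓ) :
    co ℓ i ∘ₗ evalE1m q ℓ = qnum q i • co ℓ (i - 1) := by
  cases i with
  | zero => simp [co_F_zero, qnum_zero]
  | succ i => rw [co_F_succ q h]; simp

/-! ### The diagonal factor -/

/-- The Cartan factor of the `R`-matrix: `vᵢ ⊗ vₖ ↦ q^(2ik - im - kℓ) vᵢ ⊗ vₖ`, which is
`q^((ℓ-2i)(m-2k)/2)` normalized to be `1` on `v₀ ⊗ v₀`. The sign `e = ±1` selects this operator or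
its inverse. -/
def Hd (q : ℂ) (e : ℤ) (ℓ m : ℕ) : Module.End ℂ ((Fin (ℓ + 1) → ℂ) ⊗[ℂ] (Fin (m + 1) → ℂ)) :=
  (tb ℓ m).equivFun.symm.toLinearMap ∘ₗ
    LinearMap.pi (fun x => q ^ (e * (2 * (x.1 : ℕ) * (x.2 : ℕ) - (x.1 : ℕ) * m - (x.2 : ℕ) * ℓ)) •
      LinearMap.proj x) ∘ₗ (tb ℓ m).equivFun.toLinearMap

lemma cc_of_gt {ℓ m i k : ℕ} (h : ¬ (i ≤ ℓ ∧ k ≤ m)) : cc ℓ m i k = 0 := by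
  refine TensorProduct.ext' fun x y => ?_
  rw [cc_tmul]
  by_cases hi : i ≤ ℓ
  · rw [co_of_gt (i := k) (by omega)]; simp
  · rw [co_of_gt (i := i) (by omega)]; simp

lemma cc_Hd (q : ℂ) (e : ℤ) (ℓ m i k : ℕ) :
    cc ℓ m i k ∘ₗ Hd q e ℓ m = q ^ (e * (2 * i * k - i * m - k * ℓ)) • cc ℓ m i k := by
  by_cases h : i ≤ ℓ ∧ k ≤ m
  · refine LinearMap.ext fun x => ?_
    have := tb_repr (⟨i, by omega⟩ : Fin (ℓ + 1)) (⟨k, by omega⟩ : Fin (m + 1)) (Hd q e ℓ m x)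
    rw [LinearMap.comp_apply, ← this]
    have h2 := tb_repr (⟨i, by omega⟩ : Fin (ℓ + 1)) (⟨k, by omega⟩ : Fin (m + 1)) x
    simp only [Hd, LinearMap.comp_apply, LinearEquiv.coe_coe, LinearEquiv.apply_symm_apply,
      LinearMap.pi_apply, LinearMap.smul_apply, LinearMap.proj_apply, h2]
  · rw [cc_of_gt h]; simp

lemma Hd_mul {q : ℂ} (hq0 : q ≠ 0) (e e' : ℤ) (h : e + e' = 0) (ℓ m : ℕ) :
    Hd q e ℓ m * Hd q e' ℓ m = 1 := by
  refine cc_end_ext fun i k _ _ => ?_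
  rw [Module.End.mul_eq_comp, ← LinearMap.comp_assoc, cc_Hd, LinearMap.smul_comp, cc_Hd, smul_smul,
    ← zpow_add₀ hq0, ← add_mul, h]
  simp [Module.End.one_eq_id]

/-- A weight comparison, coordinate by coordinate: conjugation by the Cartan factor multiplies the
matrix entry of `A ⊗ B` from `(i',k')` to `(i,k)` by a power of `q`, and the result has to be the
entry of `A' ⊗ B'`. -/
lemma Hd_map {q : ℂ} {ℓ m : ℕ} {A A' : Module.End ℂ (Fin (ℓ + 1) → ℂ)}
    {B B' : Module.End ℂ (Fin (m + 1) → ℂ)}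
    (h : ∀ i k : ℕ, i ≤ ℓ → k ≤ m → ∃ (α β α' β' : ℂ) (i' k' : ℕ),
      co ℓ i ∘ₗ A = α • co ℓ i' ∧ co m k ∘ₗ B = β • co m k' ∧
      co ℓ i ∘ₗ A' = α' • co ℓ i' ∧ co m k ∘ₗ B' = β' • co m k' ∧
      q ^ (1 * (2 * i * k - i * m - k * ℓ) : ℤ) * (α * β) =
        (α' * β') * q ^ (1 * (2 * i' * k' - i' * m - k' * ℓ) : ℤ)) :
    Hd q 1 ℓ m * tm A B = tm A' B' * Hd q 1 ℓ m := by
  refine cc_end_ext fun i k hi hk => ?_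
  obtain ⟨α, β, α', β', i', k', h1, h2, h3, h4, h5⟩ := h i k hi hk
  rw [Module.End.mul_eq_comp, ← LinearMap.comp_assoc, cc_Hd, LinearMap.smul_comp, cc_map h1 h2,
    Module.End.mul_eq_comp, ← LinearMap.comp_assoc, cc_map h3 h4, LinearMap.smul_comp, cc_Hd,
    smul_smul, smul_smul, h5]

section Cartan

variable {q : ℂ} (hq0 : q ≠ 0) (ℓ m : ℕ)
include hq0

lemma Hd_one_F : Hd q 1 ℓ m * tm 1 (evalE1m q m)
    = tm (evalK0 q ℓ) (evalE1m q m) * Hd q 1 ℓ m := by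
  refine Hd_map fun i k hi hk =>
    ⟨_, _, _, _, _, _, co_id ℓ i, co_F q hk, co_K0 q ℓ i, co_F q hk, ?_⟩
  rcases k with _ | k
  · simp [qnum_zero]
  · rw [one_mul (qnum q _), mul_right_comm (q ^ (2 * (i : ℤ) - ℓ)), ← zpow_add₀ hq0]
    congr 2; push_cast [Nat.add_sub_cancel]; ring

lemma Hd_F_one : Hd q 1 ℓ m * tm (evalE1m q ℓ) 1
    = tm (evalE1m q ℓ) (evalK0 q m) * Hd q 1 ℓ m := by
  refine Hd_map fun i k hi hk =>
    ⟨_, _, _, _, _, _, co_F q hi, co_id m k, co_F q hi, co_K0 q m k, ?_⟩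
  rcases i with _ | i
  · simp [qnum_zero]
  · rw [mul_one (qnum q _), mul_assoc (qnum q _), ← zpow_add₀ hq0, mul_comm]
    congr 2; push_cast [Nat.add_sub_cancel]; ring

lemma Hd_F_K1 : Hd q 1 ℓ m * tm (evalE1m q ℓ) (evalK1 q m)
    = tm (evalE1m q ℓ) 1 * Hd q 1 ℓ m := by
  refine Hd_map fun i k hi hk =>
    ⟨_, _, _, _, _, _, co_F q hi, co_K1 q m k, co_F q hi, co_id m k, ?_⟩
  rcases i with _ | i
  · simp [qnum_zero]
  · rw [mul_one, mul_left_comm, ← zpow_add₀ hq0]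
    congr 2; push_cast [Nat.add_sub_cancel]; ring

lemma Hd_E_one : Hd q 1 ℓ m * tm (evalE1p q ℓ) 1
    = tm (evalE1p q ℓ) (evalK1 q m) * Hd q 1 ℓ m := by
  refine Hd_map fun i k hi hk =>
    ⟨_, _, _, _, _, _, co_E q ℓ i, co_id m k, co_E q ℓ i, co_K1 q m k, ?_⟩
  rw [mul_one (qnum q _), mul_assoc (qnum q _), ← zpow_add₀ hq0, mul_comm]
  congr 2; push_cast; ring

lemma Hd_K0_E : Hd q 1 ℓ m * tm (evalK0 q ℓ) (evalE1p q m)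
    = tm 1 (evalE1p q m) * Hd q 1 ℓ m := by
  refine Hd_map fun i k hi hk =>
    ⟨_, _, _, _, _, _, co_K0 q ℓ i, co_E q m k, co_id ℓ i, co_E q m k, ?_⟩
  rw [one_mul (qnum q _), ← mul_assoc, ← zpow_add₀ hq0, mul_comm]
  congr 2; push_cast; ring

omit hq0 in
lemma Hd_K1_K1 : Hd q 1 ℓ m * tm (evalK1 q ℓ) (evalK1 q m)
    = tm (evalK1 q ℓ) (evalK1 q m) * Hd q 1 ℓ m :=
  Hd_map fun i k _ _ => ⟨_, _, _, _, _, _, co_K1 q ℓ i, co_K1 q m k, co_K1 q ℓ i, co_K1 q m k,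
    mul_comm _ _⟩

end Cartan

/-! ### The quasi-`R`-matrix -/

/-- The quasi-`R`-matrix `Θ = ∑ₙ cₙ (E₁⁻)ⁿ ⊗ (E₁⁺)ⁿ` on `V(ℓ,a) ⊗ V(m,b)`. Since `E₁⁻` and `E₁⁺`
are nilpotent, the terms beyond `n = ℓ + m` vanish. -/
def Th (q : ℂ) (ℓ m : ℕ) : Module.End ℂ ((Fin (ℓ + 1) → ℂ) ⊗[ℂ] (Fin (m + 1) → ℂ)) :=
  ∑ n ∈ Finset.range (ℓ + m + 1),
    qc q n • tm (evalE1m q ℓ ^ n) (evalE1p q m ^ n)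

/-- The quasi-`R`-matrix is unipotent. -/
lemma isUnit_Th (q : ℂ) (ℓ m : ℕ) : IsUnit (Th q ℓ m) := by
  have h : tm (evalE1m q ℓ) (evalE1p q m) ^ (ℓ + 1) = 0 := by
    rw [tm_pow, F_pow_eq_zero q (Nat.lt_succ_self ℓ), tm_zero_left]
  have := isUnit_sum_pow (B := Module.End ℂ ((Fin (ℓ + 1) → ℂ) ⊗[ℂ] (Fin (m + 1) → ℂ))) h (qc q)
    (by simp [qc]) (ℓ + m)
  simp only [tm_pow] at this
  exact this

section Theta

variable {q : ℂ} (hq0 : q ≠ 0) (hq : ∀ n : ℕ, 0 < n → q ^ n ≠ 1) (ℓ m : ℕ)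
include hq0 hq

/-- The quasi-`R`-matrix carries `Δ(E₁⁻)` to the same expression with `K₁` and `K₁⁻¹` exchanged. -/
lemma Th_F : Th q ℓ m * (tm 1 (evalE1m q m) + tm (evalE1m q ℓ) (evalK0 q m))
    = (tm 1 (evalE1m q m) + tm (evalE1m q ℓ) (evalK1 q m)) * Th q ℓ m := by
  rw [Th, Finset.sum_mul, Finset.mul_sum]
  simp only [smul_mul_assoc, mul_smul_comm, mul_add, add_mul, smul_add, ← tm_mul, mul_one, one_mul,
    ← pow_succ, ← pow_succ']
  refine sum_shift (by simp) (fun n => ?_) ?_ ?_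
  · simp only [← tm_smul_right, ← tm_add_right]
    rw [qc_comm_F hq0 hq (E_F_comm hq0 (sub_inv_ne hq0 hq) m) (K1_mul_E hq0 m) (E_mul_K0 hq0 m)]
  all_goals rw [F_pow_eq_zero q (by omega), tm_zero_left, smul_zero]

lemma Th_E : Th q ℓ m * (tm (evalK1 q ℓ) (evalE1p q m) + tm (evalE1p q ℓ) 1)
    = (tm (evalE1p q ℓ) 1 + tm (evalK0 q ℓ) (evalE1p q m)) * Th q ℓ m := by
  rw [add_comm (tm (evalK1 q ℓ) _), Th, Finset.sum_mul, Finset.mul_sum, eq_comm]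
  simp only [smul_mul_assoc, mul_smul_comm, mul_add, add_mul, smul_add, ← tm_mul, mul_one, one_mul,
    ← pow_succ, ← pow_succ']
  refine sum_shift (by simp) (fun n => ?_) ?_ ?_
  · simp only [← tm_smul_left, ← tm_add_left]
    rw [qc_comm_E hq0 hq (E_F_comm hq0 (sub_inv_ne hq0 hq) ℓ) (F_mul_K1 hq0 ℓ) (K0_mul_F hq0 ℓ)]
  all_goals rw [E_pow_eq_zero q (by omega), tm_zero_right, smul_zero]

omit hq in
lemma Th_K1 : Th q ℓ m * tm (evalK1 q ℓ) (evalK1 q m)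
    = tm (evalK1 q ℓ) (evalK1 q m) * Th q ℓ m := by
  have h : Commute (tm (evalE1m q ℓ) (evalE1p q m)) (tm (evalK1 q ℓ) (evalK1 q m)) := by
    rw [Commute, SemiconjBy, ← tm_mul, ← tm_mul, F_mul_K1 hq0,
      K1_mul_E hq0, tm_smul_left, tm_smul_right]
  simp only [Th, ← tm_pow]
  exact Commute.sum_left _ _ _ fun n _ => (h.pow_left n).smul_left _

omit hq hq0 in
lemma Th_F_one : Th q ℓ m * tm (evalE1m q ℓ) 1
    = tm (evalE1m q ℓ) 1 * Th q ℓ m := by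
  simp only [Th, Finset.sum_mul, Finset.mul_sum, smul_mul_assoc, mul_smul_comm,
    ← tm_mul, mul_one, one_mul, ← pow_succ, ← pow_succ']

omit hq hq0 in
/-- On the coordinate of `vₖ ⊗ v'ₘ` only the term `n = 0` of the quasi-`R`-matrix contributes. -/
lemma cc_Th (k : ℕ) (hk : k ≤ ℓ) : cc ℓ m k m ∘ₗ Th q ℓ m = cc ℓ m k m := by
  have hz : ∀ n, cc ℓ m k m ∘ₗ tm (evalE1m q ℓ ^ (n + 1)) (evalE1p q m ^ (n + 1)) = 0 := by
    intro n
    rw [pow_succ', pow_succ', tm_mul, Module.End.mul_eq_comp, ← LinearMap.comp_assoc,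
      cc_map (co_F q hk) (co_E q m m)]
    simp [qnum_zero]
  refine LinearMap.ext fun x => ?_
  have hz' : ∀ n, cc ℓ m k m (tm (evalE1m q ℓ ^ (n + 1)) (evalE1p q m ^ (n + 1)) x) = 0 :=
    fun n => LinearMap.congr_fun (hz n) x
  rw [Th, Finset.sum_range_succ']
  simp [hz', qc, tm_one, LinearMap.sum_apply]

end Theta

/-- The `R`-matrix: the flip composed with the Cartan factor and the quasi-`R`-matrix. -/
def Rm (q : ℂ) (ℓ m : ℕ) : (Fin (ℓ + 1) → ℂ) ⊗[ℂ] (Fin (m + 1) → ℂ) →ₗ[ℂ]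
    (Fin (m + 1) → ℂ) ⊗[ℂ] (Fin (ℓ + 1) → ℂ) :=
  (TensorProduct.comm ℂ (Fin (ℓ + 1) → ℂ) (Fin (m + 1) → ℂ)).toLinearMap ∘ₗ (Hd q 1 ℓ m * Th q ℓ m)

lemma Rm_bijective {q : ℂ} (hq0 : q ≠ 0) (ℓ m : ℕ) : Function.Bijective (Rm q ℓ m) := by
  have h1 : IsUnit (Hd q 1 ℓ m) :=
    ⟨⟨_, _, Hd_mul hq0 1 (-1) (by norm_num) ℓ m, Hd_mul hq0 (-1) 1 (by norm_num) ℓ m⟩, rfl⟩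
  have h2 := (Module.End.isUnit_iff (Hd q 1 ℓ m * Th q ℓ m)).mp (h1.mul (isUnit_Th q ℓ m))
  exact (TensorProduct.comm ℂ (Fin (ℓ + 1) → ℂ) (Fin (m + 1) → ℂ)).bijective.comp h2

/-- To push `R` past an operator, push the quasi-`R`-matrix, the Cartan factor and the flip past it
one after the other. -/
lemma Rm_comp {q : ℂ} {ℓ m : ℕ} {A C D : Module.End ℂ ((Fin (ℓ + 1) → ℂ) ⊗[ℂ] (Fin (m + 1) → ℂ))}
    {B : Module.End ℂ ((Fin (m + 1) → ℂ) ⊗[ℂ] (Fin (ℓ + 1) → ℂ))}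
    (h1 : Th q ℓ m * A = C * Th q ℓ m) (h2 : Hd q 1 ℓ m * C = D * Hd q 1 ℓ m)
    (h3 : (TensorProduct.comm ℂ (Fin (ℓ + 1) → ℂ) (Fin (m + 1) → ℂ)).toLinearMap ∘ₗ D
      = B ∘ₗ (TensorProduct.comm ℂ (Fin (ℓ + 1) → ℂ) (Fin (m + 1) → ℂ)).toLinearMap) :
    Rm q ℓ m ∘ₗ A = B ∘ₗ Rm q ℓ m := by
  have h : (Hd q 1 ℓ m * Th q ℓ m) ∘ₗ A = D ∘ₗ (Hd q 1 ℓ m * Th q ℓ m) := by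
    rw [← Module.End.mul_eq_comp, ← Module.End.mul_eq_comp, mul_assoc, h1, ← mul_assoc, h2,
      mul_assoc]
  rw [Rm, LinearMap.comp_assoc, h, ← LinearMap.comp_assoc, h3, LinearMap.comp_assoc]

lemma dE1m_eq (q : ℂ) (ℓ m : ℕ) :
    dE1m q ℓ m = tm 1 (evalE1m q m) + tm (evalE1m q ℓ) (evalK0 q m) := rfl

lemma dE1p_eq (q : ℂ) (ℓ m : ℕ) :
    dE1p q ℓ m = tm (evalK1 q ℓ) (evalE1p q m) + tm (evalE1p q ℓ) 1 := rfl

/-- Since the second factor has evaluation parameter `0`, the operator `Δ(E₀⁺)` reduces to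
`E₀⁺ ⊗ 1`. -/
lemma dE0_left (q a : ℂ) (ℓ m : ℕ) : dE0 q ℓ m a 0 = (a * q) • tm (evalE1m q ℓ) 1 := by
  have h : dE0 q ℓ m a 0 = tm (evalK0 q ℓ) (evalE0 q 0 m) + tm (evalE0 q a ℓ) 1 := rfl
  rw [h, E0_eq, E0_eq, tm_smul_right, tm_smul_left, zero_mul, zero_smul, zero_add]

lemma dE0_right (q a : ℂ) (ℓ m : ℕ) :
    dE0 q m ℓ 0 a = (a * q) • tm (evalK0 q m) (evalE1m q ℓ) := by
  have h : dE0 q m ℓ 0 a = tm (evalK0 q m) (evalE0 q a ℓ) + tm (evalE0 q 0 m) 1 := rfl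
  rw [h, E0_eq, E0_eq, tm_smul_right, tm_smul_left, zero_mul, zero_smul, add_zero]

lemma comm_tm {ℓ m : ℕ} (A : Module.End ℂ (Fin (ℓ + 1) → ℂ))
    (B : Module.End ℂ (Fin (m + 1) → ℂ)) :
    (TensorProduct.comm ℂ (Fin (ℓ + 1) → ℂ) (Fin (m + 1) → ℂ)).toLinearMap ∘ₗ tm A B
      = tm B A ∘ₗ (TensorProduct.comm ℂ (Fin (ℓ + 1) → ℂ) (Fin (m + 1) → ℂ)).toLinearMap :=
  TensorProduct.ext' fun _ _ => rfl

lemma dK1_mul_dK0 {q : ℂ} (hq0 : q ≠ 0) (ℓ m : ℕ) : dK1 q ℓ m * dK0 q ℓ m = 1 := by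
  have h : dK1 q ℓ m * dK0 q ℓ m =
      tm (evalK1 q ℓ) (evalK1 q m) * tm (evalK0 q ℓ) (evalK0 q m) := rfl
  rw [h, ← tm_mul, K1_mul_K0 hq0, K1_mul_K0 hq0, tm_one]

lemma dK0_mul_dK1 {q : ℂ} (hq0 : q ≠ 0) (ℓ m : ℕ) : dK0 q ℓ m * dK1 q ℓ m = 1 := by
  have h : dK0 q ℓ m * dK1 q ℓ m =
      tm (evalK0 q ℓ) (evalK0 q m) * tm (evalK1 q ℓ) (evalK1 q m) := rfl
  rw [h, ← tm_mul, K0_mul_K1 hq0, K0_mul_K1 hq0, tm_one]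

/-- A map intertwining two invertible operators intertwines their inverses. -/
lemma comp_inverse {V W : Type*} [AddCommGroup V] [Module ℂ V] [AddCommGroup W] [Module ℂ W]
    {R : V →ₗ[ℂ] W} {A A' : Module.End ℂ V} {B B' : Module.End ℂ W} (h : R ∘ₗ A = B ∘ₗ R)
    (hA : A * A' = 1) (hB : B' * B = 1) : R ∘ₗ A' = B' ∘ₗ R := by
  refine LinearMap.ext fun x => ?_
  have h1 := LinearMap.congr_fun h (A' x)
  have h2 := LinearMap.congr_fun hA x
  have h3 := LinearMap.congr_fun hB (R (A' x))
  simp only [LinearMap.comp_apply, Module.End.mul_apply, Module.End.one_apply] at h1 h2 h3 ⊢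
  rw [← h3, ← h1, h2]

lemma dK1_eq (q : ℂ) (ℓ m : ℕ) : dK1 q ℓ m = tm (evalK1 q ℓ) (evalK1 q m) := rfl

section Intertwine

variable {q : ℂ} (hq0 : q ≠ 0) (hq : ∀ n : ℕ, 0 < n → q ^ n ≠ 1) (ℓ m : ℕ)
include hq0

include hq in
lemma Rm_F : Rm q ℓ m ∘ₗ dE1m q ℓ m = dE1m q m ℓ ∘ₗ Rm q ℓ m := by
  rw [dE1m_eq, dE1m_eq]
  refine Rm_comp (Th_F hq0 hq ℓ m) (D := tm (evalK0 q ℓ) (evalE1m q m) +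
    tm (evalE1m q ℓ) 1) ?_ ?_
  · rw [mul_add, Hd_one_F hq0, Hd_F_K1 hq0, add_mul]
  · rw [LinearMap.comp_add, LinearMap.add_comp, comm_tm, comm_tm]
    exact add_comm _ _

include hq in
lemma Rm_E : Rm q ℓ m ∘ₗ dE1p q ℓ m = dE1p q m ℓ ∘ₗ Rm q ℓ m := by
  rw [dE1p_eq, dE1p_eq]
  refine Rm_comp (Th_E hq0 hq ℓ m) (D := tm (evalE1p q ℓ) (evalK1 q m) +
    tm 1 (evalE1p q m)) ?_ ?_
  · rw [mul_add, Hd_E_one hq0, Hd_K0_E hq0, add_mul]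
  · rw [LinearMap.comp_add, LinearMap.add_comp, comm_tm, comm_tm]

lemma Rm_E0 (a : ℂ) : Rm q ℓ m ∘ₗ dE0 q ℓ m a 0 = dE0 q m ℓ 0 a ∘ₗ Rm q ℓ m := by
  rw [dE0_left, dE0_right, LinearMap.comp_smul, LinearMap.smul_comp,
    Rm_comp (Th_F_one ℓ m) (Hd_F_one hq0 ℓ m) (comm_tm _ _)]

lemma Rm_K1 : Rm q ℓ m ∘ₗ dK1 q ℓ m = dK1 q m ℓ ∘ₗ Rm q ℓ m := by
  rw [dK1_eq, dK1_eq]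
  exact Rm_comp (Th_K1 hq0 ℓ m) (Hd_K1_K1 ℓ m) (comm_tm _ _)

lemma Rm_K0 : Rm q ℓ m ∘ₗ dK0 q ℓ m = dK0 q m ℓ ∘ₗ Rm q ℓ m :=
  comp_inverse (Rm_K1 hq0 ℓ m) (dK1_mul_dK0 hq0 ℓ m) (dK0_mul_dK1 hq0 m ℓ)

end Intertwine

lemma cc_Rm (q : ℂ) {ℓ m k : ℕ} (hk : k ≤ ℓ)
    (x : (Fin (ℓ + 1) → ℂ) ⊗[ℂ] (Fin (m + 1) → ℂ)) :
    cc m ℓ m k (Rm q ℓ m x) = q ^ ((k : ℤ) * m - m * ℓ) * cc ℓ m k m x := by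
  have h : cc m ℓ m k ∘ₗ Rm q ℓ m = q ^ ((k : ℤ) * m - m * ℓ) • cc ℓ m k m := by
    rw [Rm, ← LinearMap.comp_assoc, cc_comm, Module.End.mul_eq_comp, ← LinearMap.comp_assoc, cc_Hd,
      LinearMap.smul_comp, cc_Th ℓ m k hk]
    congr 2; ring
  exact LinearMap.congr_fun h x

/-! ### Lowest weight vectors -/

lemma cc_dE1m (q : ℂ) {ℓ m i k : ℕ} (hi : i ≤ ℓ) (hk : k ≤ m)
    (y : (Fin (ℓ + 1) → ℂ) ⊗[ℂ] (Fin (m + 1) → ℂ)) :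
    cc ℓ m i k (dE1m q ℓ m y) = qnum q k * cc ℓ m i (k - 1) y +
      qnum q i * q ^ (2 * (k : ℤ) - m) * cc ℓ m (i - 1) k y := by
  have h1 := LinearMap.congr_fun (cc_map (co_id ℓ i) (co_F q hk)) y
  have h2 := LinearMap.congr_fun (cc_map (co_F q hi) (co_K0 q m k)) y
  simp only [LinearMap.comp_apply, LinearMap.smul_apply, smul_eq_mul, one_mul] at h1 h2
  rw [dE1m_eq, LinearMap.add_apply, map_add, h1, h2]

/-- A vector killed by `Δ(E₁⁻)` is determined by its components along `v_ℓ ⊗ vₖ`. -/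
lemma eq_zero_of_dE1m {q : ℂ} (hq0 : q ≠ 0) (hq : ∀ n : ℕ, 0 < n → q ^ n ≠ 1) {ℓ m : ℕ}
    {y : (Fin (ℓ + 1) → ℂ) ⊗[ℂ] (Fin (m + 1) → ℂ)} (h : dE1m q ℓ m y = 0)
    (h0 : ∀ k ≤ m, cc ℓ m ℓ k y = 0) : y = 0 := by
  have key : ∀ d i : ℕ, i + d = ℓ → ∀ k ≤ m, cc ℓ m i k y = 0 := by
    intro d
    induction d with
    | zero =>
      intro i hi k hk
      obtain rfl : i = ℓ := by omega
      exact h0 k hk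
    | succ d ih =>
      intro i hi k hk
      have h1 := cc_dE1m q (show i + 1 ≤ ℓ by omega) hk y
      rw [h, map_zero, ih (i + 1) (by omega) (k - 1) (by omega), mul_zero, zero_add,
        Nat.add_sub_cancel, eq_comm] at h1
      refine (mul_eq_zero.mp h1).resolve_left (mul_ne_zero ?_ (zpow_ne_zero _ hq0))
      exact_mod_cast qnum_succ_ne hq0 hq i
  refine cc_ext fun i k hi hk => ?_
  rw [key (ℓ - i) i (by omega) k hk, map_zero]

lemma cc_xt (q : ℂ) {ℓ m ν i k : ℕ} (hνℓ : ν ≤ ℓ) (hνm : ν ≤ m) (hi : i ≤ ℓ) (hk : k ≤ m) :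
    cc ℓ m i k (xt q ℓ m ν) = if i + k + ν = ℓ + m then
      (-1) ^ (m - k) * q ^ ((m - k) * (k + 1)) * qfac q i * qfac q k else 0 := by
  have hν : (0 : ℤ) ≤ (ν : ℤ) ∧ (ν : ℤ) ≤ ℓ ∧ (ν : ℤ) ≤ m := by omega
  rw [xt, dif_pos hν, map_sum]
  simp only [map_smul, cc_single, smul_eq_mul, Int.toNat_natCast]
  split_ifs with h
  · rw [Finset.sum_eq_single (⟨m - k, by omega⟩ : Fin (ν + 1))]
    · have e1 : ℓ - ν + (m - k) = i := by omega
      have e2 : m - (m - k) = k := by omega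
      simp only [e1, e2, and_self, if_true, mul_one]
    · intro j _ hj
      rw [if_neg, mul_zero]
      rintro ⟨h1, h2⟩
      exact hj (Fin.ext (by simp only; omega))
    · simp
  · refine Finset.sum_eq_zero fun j _ => ?_
    have := j.isLt
    rw [if_neg (by omega), mul_zero]

lemma xt'_eq (q : ℂ) (ℓ m : ℕ) (ν : ℤ) : xt' q ℓ m ν = xt q m ℓ ν := by
  unfold xt xt'
  by_cases h : 0 ≤ ν ∧ ν ≤ ℓ ∧ ν ≤ m
  · rw [dif_pos h, dif_pos (by tauto)]
  · rw [dif_neg h, dif_neg (by tauto)]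

lemma qfac_succ (q : ℂ) (n : ℕ) : qfac q (n + 1) = qfac q n * qnum q ((n : ℤ) + 1) :=
  Finset.prod_range_succ _ _

lemma dE1m_xt {q : ℂ} (hq0 : q ≠ 0) {ℓ m ν : ℕ} (hνℓ : ν ≤ ℓ) (hνm : ν ≤ m) :
    dE1m q ℓ m (xt q ℓ m ν) = 0 := by
  refine cc_ext fun i k hi hk => ?_
  rw [map_zero, cc_dE1m q hi hk, cc_xt q hνℓ hνm hi (by omega), cc_xt q hνℓ hνm (by omega) hk]
  by_cases h : i + k + ν = ℓ + m + 1
  · obtain ⟨i, rfl⟩ : ∃ i', i = i' + 1 := ⟨i - 1, by omega⟩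
    obtain ⟨k, rfl⟩ : ∃ k', k = k' + 1 := ⟨k - 1, by omega⟩
    obtain ⟨j, rfl⟩ : ∃ j, m = k + 1 + j := ⟨m - (k + 1), by omega⟩
    have e1 : k + 1 + j - k = j + 1 := by omega
    have e2 : k + 1 + j - (k + 1) = j := by omega
    rw [if_pos (by omega), if_pos (by omega)]
    simp only [Nat.add_sub_cancel, qfac_succ, e1, e2]
    have hz : q ^ ((j + 1) * (k + 1)) =
        q ^ (2 * ((k + 1 : ℕ) : ℤ) - ((k + 1 + j : ℕ) : ℤ)) * q ^ (j * (k + 1 + 1)) := by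
      rw [← zpow_natCast, ← zpow_natCast, ← zpow_add₀ hq0]
      congr 1; push_cast; ring
    rw [hz]
    push_cast
    ring
  · rcases i with _ | i <;> rcases k with _ | k
    · simp [qnum_zero]
    · rw [if_neg (by omega)]; simp [qnum_zero]
    · rw [if_neg (c := i + 1 - 1 + 0 + ν = ℓ + m) (by omega)]; simp [qnum_zero]
    · rw [if_neg (by omega), if_neg (by omega)]; simp

/-- Both sides are killed by `Δ(E₁⁻)`, so it suffices to compare their components along
`vₘ ⊗ vₖ`, where `R` acts through its Cartan factor alone. -/
lemma Rm_xt {q : ℂ} (hq0 : q ≠ 0) (hq : ∀ n : ℕ, 0 < n → q ^ n ≠ 1) {ℓ m ν : ℕ}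
    (hνℓ : ν ≤ ℓ) (hνm : ν ≤ m) :
    Rm q ℓ m (xt q ℓ m ν) = ((-1) ^ ν * (q ^ (ν * (ℓ + m - ν + 1)))⁻¹) • xt' q ℓ m ν := by
  rw [xt'_eq, ← sub_eq_zero]
  refine eq_zero_of_dE1m hq0 hq ?_ fun k hk => ?_
  · have h := LinearMap.congr_fun (Rm_F hq0 hq ℓ m) (xt q ℓ m ν)
    rw [LinearMap.comp_apply, LinearMap.comp_apply, dE1m_xt hq0 hνℓ hνm, map_zero] at h
    rw [map_sub, map_smul, dE1m_xt hq0 hνm hνℓ, ← h, smul_zero, sub_zero]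
  · rw [map_sub, map_smul, cc_Rm q hk, cc_xt q hνℓ hνm hk le_rfl, cc_xt q hνm hνℓ le_rfl hk]
    by_cases h : k + ν = ℓ
    · subst h
      rw [if_pos (by omega), if_pos (by omega)]
      have e1 : k + ν + m - ν = k + m := by omega
      have e2 : k + ν - k = ν := by omega
      have e3 : ((-1 : ℂ) ^ ν) * (-1) ^ ν = 1 := by rw [← mul_pow]; simp
      have hz : q ^ ((k : ℤ) * m - m * ((k + ν : ℕ) : ℤ)) * q ^ (ν * (k + m + 1))
          = q ^ (ν * (k + 1)) := by
        rw [← zpow_natCast, ← zpow_natCast, ← zpow_add₀ hq0]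
        congr 1; push_cast; ring
      have hne : q ^ (ν * (k + m + 1)) ≠ 0 := pow_ne_zero _ hq0
      rw [e1, e2, sub_eq_zero, smul_eq_mul, eq_div_of_mul_eq hne hz]
      simp only [Nat.sub_self, pow_zero, zero_mul, one_mul, mul_one]
      linear_combination
        (-q ^ (ν * (k + 1)) / q ^ (ν * (k + m + 1)) * qfac q k * qfac q m) * e3
    · rw [if_neg (by omega), if_neg (by omega)]; simp

/-! ### Uniqueness -/

/-- The basis vector `vᵢ` of `V(ℓ,a)`, with `vᵢ = 0` for `i > ℓ`. -/
def vs (ℓ i : ℕ) : Fin (ℓ + 1) → ℂ := fun j => if (j : ℕ) = i then 1 else 0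

lemma vs_fin {ℓ : ℕ} (i : Fin (ℓ + 1)) : vs ℓ i = Pi.single i 1 := by
  funext j
  simp [vs, Pi.single_apply, Fin.ext_iff]

lemma F_vs (q : ℂ) (ℓ i : ℕ) : evalE1m q ℓ (vs ℓ i) = qnum q ((i : ℤ) + 1) • vs ℓ (i + 1) := by
  funext j
  rw [← co_fin j (evalE1m q ℓ _), ← co_fin j (_ • _), ← LinearMap.comp_apply,
    co_F q (by omega), LinearMap.smul_apply, map_smul]
  rcases j with ⟨_ | j, hj⟩
  · simp [qnum_zero, co_of_le, vs]
  · rw [co_of_le (by simp only; omega), co_of_le (by simp only; omega)]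
    by_cases h : j = i <;> simp [vs, h]

lemma K0_vs (q : ℂ) (ℓ i : ℕ) : evalK0 q ℓ (vs ℓ i) = q ^ (2 * (i : ℤ) - ℓ) • vs ℓ i := by
  funext j
  rw [← co_fin j (evalK0 q ℓ _), ← co_fin j (_ • _), ← LinearMap.comp_apply, co_K0,
    LinearMap.smul_apply, map_smul, co_fin]
  by_cases h : (j : ℕ) = i <;> simp [vs, h]

/-- Under the lowering operators `E₁⁻ ⊗ 1` and `Δ(E₁⁻)`, the vector `v₀ ⊗ v₀` generates all of
`V(ℓ,a) ⊗ V(m)`. -/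
lemma cyclic {q : ℂ} (hq0 : q ≠ 0) (hq : ∀ n : ℕ, 0 < n → q ^ n ≠ 1) {ℓ m : ℕ}
    (W : Submodule ℂ ((Fin (ℓ + 1) → ℂ) ⊗[ℂ] (Fin (m + 1) → ℂ)))
    (h0 : vs ℓ 0 ⊗ₜ vs m 0 ∈ W) (h1 : ∀ x ∈ W, tm (evalE1m q ℓ) 1 x ∈ W)
    (h2 : ∀ x ∈ W, dE1m q ℓ m x ∈ W) : W = ⊤ := by
  have key : ∀ k i : ℕ, vs ℓ i ⊗ₜ vs m k ∈ W := by
    intro k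
    induction k with
    | zero =>
      intro i
      induction i with
      | zero => exact h0
      | succ i ih =>
        have := h1 _ ih
        rw [tm_tmul, F_vs, Module.End.one_apply, ← TensorProduct.smul_tmul'] at this
        exact (W.smul_mem_iff (qnum_succ_ne hq0 hq i)).mp this
    | succ k ih =>
      intro i
      have := h2 _ (ih i)
      rw [dE1m_eq, LinearMap.add_apply, tm_tmul, tm_tmul, F_vs, F_vs, K0_vs, Module.End.one_apply,
        TensorProduct.tmul_smul, TensorProduct.tmul_smul, ← TensorProduct.smul_tmul'] at this
      exact (W.smul_mem_iff (qnum_succ_ne hq0 hq k)).mp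
        ((W.add_mem_iff_left (W.smul_mem _ (W.smul_mem _ (ih (i + 1))))).mp this)
  rw [eq_top_iff, ← (tb ℓ m).span_eq, Submodule.span_le]
  rintro _ ⟨⟨i, k⟩, rfl⟩
  have := key k i
  rw [vs_fin, vs_fin] at this
  simpa [tb, Module.Basis.tensorProduct_apply] using this

lemma zpow_ne_one {q : ℂ} (hq0 : q ≠ 0) (hq : ∀ n : ℕ, 0 < n → q ^ n ≠ 1) (ℓ m i k : ℕ)
    (h : q ^ (2 * (i : ℤ) - ℓ) * q ^ (2 * (k : ℤ) - m) = q ^ (-(ℓ : ℤ)) * q ^ (-(m : ℤ))) :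
    i = 0 ∧ k = 0 := by
  by_contra hne
  refine hq (2 * i + 2 * k) (by omega) ?_
  rw [← zpow_add₀ hq0, ← zpow_add₀ hq0] at h
  have : (2 * (i : ℤ) - ℓ + (2 * k - m)) = ((2 * i + 2 * k : ℕ) : ℤ) + (-(ℓ : ℤ) + -(m : ℤ)) := by
    push_cast; ring
  rw [this, zpow_add₀ hq0, zpow_natCast] at h
  exact mul_right_cancel₀ (zpow_ne_zero _ hq0) (h.trans (one_mul _).symm)

/-- The image of `v₀ ⊗ v₀` under a map commuting with `K₀` lies in the line through `v₀ ⊗ v₀`,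
the `q^(-ℓ-m)`-eigenspace of `K₀`. -/
lemma cc_image {q : ℂ} (hq0 : q ≠ 0) (hq : ∀ n : ℕ, 0 < n → q ^ n ≠ 1) {ℓ m : ℕ}
    {T : (Fin (ℓ + 1) → ℂ) ⊗[ℂ] (Fin (m + 1) → ℂ) →ₗ[ℂ]
      (Fin (m + 1) → ℂ) ⊗[ℂ] (Fin (ℓ + 1) → ℂ)}
    (hT : T ∘ₗ dK0 q ℓ m = dK0 q m ℓ ∘ₗ T) {i k : ℕ} (h : ¬ (i = 0 ∧ k = 0)) :
    cc m ℓ i k (T (vs ℓ 0 ⊗ₜ vs m 0)) = 0 := by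
  have h1 := congrArg (cc m ℓ i k) (LinearMap.congr_fun hT (vs ℓ 0 ⊗ₜ vs m 0))
  have h2 := LinearMap.congr_fun (cc_map (co_K0 q m i) (co_K0 q ℓ k)) (T (vs ℓ 0 ⊗ₜ vs m 0))
  have h3 : dK0 q ℓ m (vs ℓ 0 ⊗ₜ vs m 0) =
      (q ^ (-(ℓ : ℤ)) * q ^ (-(m : ℤ))) • (vs ℓ 0 ⊗ₜ[ℂ] vs m 0) := by
    change evalK0 q ℓ (vs ℓ 0) ⊗ₜ[ℂ] evalK0 q m (vs m 0) = _
    rw [K0_vs, K0_vs, TensorProduct.tmul_smul, ← TensorProduct.smul_tmul', smul_smul]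
    simp [mul_comm]
  have h4 : cc m ℓ i k (dK0 q m ℓ (T (vs ℓ 0 ⊗ₜ vs m 0))) = _ := h2
  rw [LinearMap.comp_apply, LinearMap.comp_apply, h3, h4, map_smul, map_smul, LinearMap.smul_apply,
    smul_eq_mul, smul_eq_mul, ← sub_eq_zero, ← sub_mul] at h1
  refine (mul_eq_zero.mp h1).resolve_left fun h5 => h ?_
  exact (zpow_ne_one hq0 hq m ℓ i k (by rw [← sub_eq_zero.mp h5, mul_comm]))

/-- An intertwiner of `Δ(E₀⁺)`, `Δ(E₁⁻)` and `Δ(K₀)` is determined by its value on `v₀ ⊗ v₀`, which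
is a multiple of `v₀ ⊗ v₀`. -/
lemma Rm_unique {q : ℂ} (hq0 : q ≠ 0) (hq : ∀ n : ℕ, 0 < n → q ^ n ≠ 1) {ℓ m : ℕ} {a : ℂ}
    (ha : a ≠ 0) (T : (Fin (ℓ + 1) → ℂ) ⊗[ℂ] (Fin (m + 1) → ℂ) →ₗ[ℂ]
      (Fin (m + 1) → ℂ) ⊗[ℂ] (Fin (ℓ + 1) → ℂ))
    (h0 : T ∘ₗ dE0 q ℓ m a 0 = dE0 q m ℓ 0 a ∘ₗ T)
    (h1 : T ∘ₗ dE1m q ℓ m = dE1m q m ℓ ∘ₗ T)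
    (hK : T ∘ₗ dK0 q ℓ m = dK0 q m ℓ ∘ₗ T) : ∃ c : ℂ, T = c • Rm q ℓ m := by
  set x : (Fin (ℓ + 1) → ℂ) ⊗[ℂ] (Fin (m + 1) → ℂ) := vs ℓ 0 ⊗ₜ vs m 0 with hx
  have hx0 : x ≠ 0 := by
    intro h
    have h' := congrArg (cc ℓ m 0 0) h
    rw [hx, cc_tmul, map_zero, co_of_le (Nat.zero_le _), co_of_le (Nat.zero_le _)] at h'
    simp [vs] at h'
  have hR : cc m ℓ 0 0 (Rm q ℓ m x) ≠ 0 := by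
    intro h
    refine hx0 ((Rm_bijective hq0 ℓ m).injective ?_)
    rw [map_zero]
    refine cc_ext fun i k _ _ => ?_
    rw [map_zero]
    by_cases hik : i = 0 ∧ k = 0
    · rw [hik.1, hik.2, h]
    · exact cc_image hq0 hq (Rm_K0 hq0 ℓ m) hik
  refine ⟨cc m ℓ 0 0 (T x) / cc m ℓ 0 0 (Rm q ℓ m x), ?_⟩
  set c := cc m ℓ 0 0 (T x) / cc m ℓ 0 0 (Rm q ℓ m x) with hc
  have hTx : T x = c • Rm q ℓ m x := by
    refine cc_ext fun i k _ _ => ?_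
    rw [map_smul]
    by_cases hik : i = 0 ∧ k = 0
    · rw [hik.1, hik.2, hc, smul_eq_mul, div_mul_cancel₀ _ hR]
    · rw [cc_image hq0 hq hK hik, cc_image hq0 hq (Rm_K0 hq0 ℓ m) hik, smul_zero]
  -- The equalizer of `T` and `c • R` is a submodule stable under `E₁⁻ ⊗ 1` (a nonzero multiple
  -- of `Δ(E₀⁺)`) and `Δ(E₁⁻)`.
  have hW : LinearMap.eqLocus T (c • Rm q ℓ m) = ⊤ := by
    refine cyclic hq0 hq _ hTx (fun y hy => ?_) fun y hy => ?_
    · have e1 := LinearMap.congr_fun h0 y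
      have e2 := LinearMap.congr_fun (Rm_E0 hq0 ℓ m a) y
      rw [LinearMap.mem_eqLocus] at hy ⊢
      rw [LinearMap.comp_apply, LinearMap.comp_apply, dE0_left, LinearMap.smul_apply,
        map_smul] at e1 e2
      rw [hy, LinearMap.smul_apply, map_smul, ← e2, smul_comm] at e1
      exact smul_right_injective _ (mul_ne_zero ha hq0) e1
    · have e1 := LinearMap.congr_fun h1 y
      have e2 := LinearMap.congr_fun (Rm_F hq0 hq ℓ m) y
      rw [LinearMap.mem_eqLocus] at hy ⊢
      rw [LinearMap.comp_apply, LinearMap.comp_apply] at e1 e2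
      rw [e1, hy, LinearMap.smul_apply, LinearMap.smul_apply, map_smul, e2]
  exact LinearMap.ext fun y => LinearMap.mem_eqLocus.mp (hW ▸ Submodule.mem_top)

/-- there is an intertwiner `R : V(ℓ,a) ⊗ V(m) → V(m) ⊗ V(ℓ,a)` with
`R x̃_{ℓ+m-2ν} = (-1)^ν q^(-ν(ℓ+m-ν+1)) x̃'_{ℓ+m-2ν}` for all `0 ≤ ν ≤ min{ℓ,m}`, and
every intertwiner is a scalar multiple of `R`. -/
theorem stmt19 (q : ℂ) (hq0 : q ≠ 0) (hq : ∀ n : ℕ, 0 < n → q ^ n ≠ 1)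
    (ℓ m : ℕ) (hℓ : 1 ≤ ℓ) (hm : 1 ≤ m) (a : ℂ) (ha : a ≠ 0) :
    ∃ R : TensorProduct ℂ (Fin (ℓ + 1) → ℂ) (Fin (m + 1) → ℂ) ≃ₗ[ℂ]
        TensorProduct ℂ (Fin (m + 1) → ℂ) (Fin (ℓ + 1) → ℂ),
      IntertwinesAll R.toLinearMap
        (dE0 q ℓ m a 0) (dE1p q ℓ m) (dE1m q ℓ m) (dK0 q ℓ m) (dK1 q ℓ m)
        (dE0 q m ℓ 0 a) (dE1p q m ℓ) (dE1m q m ℓ) (dK0 q m ℓ) (dK1 q m ℓ) ∧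
      (∀ ν : ℕ, ν ≤ ℓ → ν ≤ m →
        R (xt q ℓ m ν) = ((-1) ^ ν * (q ^ (ν * (ℓ + m - ν + 1)))⁻¹) • xt' q ℓ m ν) ∧
      (∀ T : TensorProduct ℂ (Fin (ℓ + 1) → ℂ) (Fin (m + 1) → ℂ) →ₗ[ℂ]
          TensorProduct ℂ (Fin (m + 1) → ℂ) (Fin (ℓ + 1) → ℂ),
        IntertwinesAll T
          (dE0 q ℓ m a 0) (dE1p q ℓ m) (dE1m q ℓ m) (dK0 q ℓ m) (dK1 q ℓ m)
          (dE0 q m ℓ 0 a) (dE1p q m ℓ) (dE1m q m ℓ) (dK0 q m ℓ) (dK1 q m ℓ) →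
        ∃ c : ℂ, T = c • R.toLinearMap) := by
  refine ⟨LinearEquiv.ofBijective (Rm q ℓ m) (Rm_bijective hq0 ℓ m), ⟨Rm_E0 hq0 ℓ m a,
    Rm_E hq0 hq ℓ m, Rm_F hq0 hq ℓ m, Rm_K0 hq0 ℓ m, Rm_K1 hq0 ℓ m⟩, ?_, ?_⟩
  · exact fun ν hνℓ hνm => Rm_xt hq0 hq hνℓ hνm
  · rintro T ⟨h0, -, h1, hK, -⟩
    exact Rm_unique hq0 hq ha T h0 h1 hK

end
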